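/- Let P be a convex polytope of dimension d and let 0 ≤ k ≤ d-1. Then every k-dimensional face F of P has at least (k+1)(d-k) neighbors in the graph G_k(P). -/

import Mathlib

open Set

/-- A convex polytope in `ℝ^N`: the convex hull of a finite set of points. -/
def IsPolytope {N : ℕ} (P : Set (EuclideanSpace ℝ (Fin N))) : Prop :=
  ∃ S : Set (EuclideanSpace ℝ (Fin N)), S.Finite ∧ P = convexHull ℝ S

/-- The dimension of a subset of `ℝ^N`: the dimension of its affine hull. -/
noncomputable def sdim {N : ℕ} (P : Set (EuclideanSpace ℝ (Fin N))) : ℕ :=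
  Module.finrank ℝ (affineSpan ℝ P).direction

/-- `F` is a face of `P` of dimension `k`: a nonempty exposed subset of `P`
(the set of minimizers over `P` of some linear functional) of dimension `k`. -/
def IsFaceDim {N : ℕ} (P F : Set (EuclideanSpace ℝ (Fin N))) (k : ℕ) : Prop :=
  IsExposed ℝ P F ∧ F.Nonempty ∧ sdim F = k

/-- The graph `G_k(P)` on the `k`-dimensional faces of `P`: two such faces
are adjacent if some `(k+1)`-dimensional face of `P` contains both. -/
def faceGraph {N : ℕ} (P : Set (EuclideanSpace ℝ (Fin N))) (k : ℕ) :
    SimpleGraph {F : Set (EuclideanSpace ℝ (Fin N)) // IsFaceDim P F k} :=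
  SimpleGraph.fromRel (fun F F' => ∃ G, IsFaceDim P G (k + 1) ∧ F.1 ⊆ G ∧ F'.1 ⊆ G)

/-- A graph is `m`-connected if it has at least `m+1` nodes and deleting any set
of at most `m-1` nodes (and incident edges) leaves a connected graph. -/
def MConnected {V : Type*} (G : SimpleGraph V) (m : ℕ) : Prop :=
  m + 1 ≤ Nat.card V ∧
    ∀ S : Set V, S.Finite → S.ncard < m → (G.induce Sᶜ).Connected

/-!
A polytope is handled through a finite set `S` of points spanning it: its faces are the convex hulls
of the exposed subsets of `S`, on which a functional attains its maximum over `S`. Tilting a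
supporting hyperplane about a face `T` until it hits a new point of `S` shows that maximal proper
faces have codimension one, and that for every proper face `G ⊇ T` some face of dimension
`dim T + 1` contains `T` but is not contained in `G`. By induction at least `dim S - dim T` faces of
dimension `dim T + 1` contain `T`. In particular every ridge lies on two facets, so passing from a
facet to the whole increases the number of facets, and a face of dimension `n ≥ 1` has at least
`n + 1` of them. Each face of dimension `dim T + 1` containing `T` thus contributes at least
`dim T + 1` facets other than `T`, all of them neighbors of `T`, and no two such faces contribute
the same neighbor, because they meet only in `T`.
-/

section AffineDim

variable {E : Type*} [AddCommGroup E] [Module ℝ E]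

/-- The dimension of the affine hull of a set of points in an arbitrary real vector space;
it extends `sdim`, and like `sdim` it takes the value `0` on the empty set. -/
noncomputable def affineDim (S : Set E) : ℕ :=
  Module.finrank ℝ (vectorSpan ℝ S)

lemma affineDim_convexHull (S : Set E) : affineDim (convexHull ℝ S) = affineDim S := by
  rw [affineDim, affineDim, ← direction_affineSpan, affineSpan_convexHull, direction_affineSpan]

lemma vectorSpan_le_ker_iff {S : Set E} {l : E →ₗ[ℝ] ℝ} :
    vectorSpan ℝ S ≤ LinearMap.ker l ↔ ∀ x ∈ S, ∀ y ∈ S, l x = l y := by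
  refine ⟨fun h x hx y hy ↦ ?_, fun h ↦ ?_⟩
  · simpa [sub_eq_zero] using h (vsub_mem_vectorSpan ℝ hx hy)
  · rw [vectorSpan_def, Submodule.span_le]
    rintro _ ⟨x, hx, y, hy, rfl⟩
    simp [h x hx y hy]

variable [FiniteDimensional ℝ E]

lemma affineDim_mono {S T : Set E} (h : T ⊆ S) : affineDim T ≤ affineDim S :=
  Submodule.finrank_mono (vectorSpan_mono ℝ h)

lemma finrank_le_finrank_inf_ker_add_one (W : Submodule ℝ E) (l : E →ₗ[ℝ] ℝ) :
    Module.finrank ℝ W ≤ Module.finrank ℝ ↥(W ⊓ LinearMap.ker l) + 1 := by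
  have sup_add_inf := Submodule.finrank_sup_add_finrank_inf_eq W (LinearMap.ker l)
  have sup_le := (W ⊔ LinearMap.ker l).finrank_le
  have rank_nullity := l.finrank_range_add_finrank_ker
  have range_le := (LinearMap.range l).finrank_le
  rw [Module.finrank_self] at range_le
  omega

end AffineDim

lemma exists_tilt_of_pos {α : Type*} {S : Set α} (hS : S.Finite) {a b : α → ℝ}
    (ha : ∀ s ∈ S, a s ≤ 0) (hab : ∀ s ∈ S, a s = 0 → b s = 0) (hb : ∃ s ∈ S, 0 < b s) :
    ∃ τ > 0, (∀ s ∈ S, a s + τ * b s ≤ 0) ∧ ∃ s ∈ S, b s ≠ 0 ∧ a s + τ * b s = 0 := by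
  -- `τ` is the smallest of the ratios `-a s / b s` with `b s > 0`.
  obtain ⟨m, ⟨hmS, hbm⟩, hmin⟩ :=
    Set.exists_min_image {s ∈ S | 0 < b s} (fun s ↦ -a s / b s) (hS.sep _) hb
  have ham : a m < 0 := (ha m hmS).lt_of_ne fun h ↦ hbm.ne' (hab m hmS h)
  have hτ : 0 < -a m / b m := div_pos (neg_pos.2 ham) hbm
  refine ⟨-a m / b m, hτ, fun s hs ↦ ?_, m, hmS, hbm.ne', ?_⟩
  · rcases le_or_gt (b s) 0 with hbs | hbs
    · exact add_nonpos (ha s hs) (mul_nonpos_of_nonneg_of_nonpos hτ.le hbs)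
    · have := (le_div_iff₀ hbs).1 (hmin s ⟨hs, hbs⟩)
      linarith
  · rw [div_mul_cancel₀ _ hbm.ne', add_neg_cancel]

lemma exists_tilt {α : Type*} {S : Set α} (hS : S.Finite) {a b : α → ℝ}
    (ha : ∀ s ∈ S, a s ≤ 0) (hab : ∀ s ∈ S, a s = 0 → b s = 0) (hb : ∃ s ∈ S, b s ≠ 0) :
    ∃ τ ≠ 0, (∀ s ∈ S, a s + τ * b s ≤ 0) ∧ ∃ s ∈ S, b s ≠ 0 ∧ a s + τ * b s = 0 := by
  obtain ⟨s, hs, hbs⟩ := hb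
  rcases hbs.lt_or_gt with hneg | hpos
  · obtain ⟨τ, hτ, h⟩ := exists_tilt_of_pos (b := -b) hS ha
      (fun s hs h ↦ neg_eq_zero.2 (hab s hs h)) ⟨s, hs, neg_pos.2 hneg⟩
    exact ⟨-τ, neg_ne_zero.2 hτ.ne', by simpa using h⟩
  · obtain ⟨τ, hτ, h⟩ := exists_tilt_of_pos hS ha hab ⟨s, hs, hpos⟩
    exact ⟨τ, hτ.ne', h⟩

lemma mul_ncard_le_ncard_biUnion {ι α : Type*} {I : Set ι} {f : ι → Set α} {n : ℕ}
    (hI : I.Finite) (hf : ∀ i ∈ I, (f i).Finite) (hdisj : I.PairwiseDisjoint f)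
    (hn : ∀ i ∈ I, n ≤ (f i).ncard) : n * I.ncard ≤ (⋃ i ∈ I, f i).ncard := by
  induction I, hI using Set.Finite.induction_on with
  | empty => simp
  | @insert a I ha hI ih =>
    have hdisj' := hdisj.subset (Set.subset_insert a I)
    simp only [Set.forall_mem_insert] at hf hn
    have hunion : Disjoint (f a) (⋃ i ∈ I, f i) := Set.disjoint_iUnion₂_right.2 fun i hi ↦
      hdisj (Set.mem_insert a I) (Set.mem_insert_of_mem a hi) (ne_of_mem_of_not_mem hi ha).symm
    rw [Set.biUnion_insert, Set.ncard_union_eq hunion hf.1 (hI.biUnion hf.2),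
      Set.ncard_insert_of_notMem ha hI, mul_add_one, add_comm]
    exact add_le_add hn.1 (ih hf.2 hdisj' hn.2)

lemma ne_of_disjoint_of_subset {α : Type*} {A B S : Set α} (hAB : Disjoint A B) (hB : B.Nonempty)
    (hBS : B ⊆ S) : A ≠ S := by
  rintro rfl
  exact hB.ne_empty (hAB.eq_bot_of_ge hBS)

section ExposedFace

variable {E : Type*} [AddCommGroup E] [Module ℝ E] [TopologicalSpace E]
variable {S T U : Set E}

lemma isExposed_sep_eq {l : StrongDual ℝ E} {c : ℝ} (hl : ∀ s ∈ S, l s ≤ c) :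
    IsExposed ℝ S {s ∈ S | l s = c} := by
  rintro ⟨t, htS, htc⟩
  refine ⟨l, Set.ext fun s ↦ and_congr_right fun hs ↦ ⟨fun h y hy ↦ h ▸ hl y hy, fun h ↦ ?_⟩⟩
  exact (hl s hs).antisymm (htc ▸ h t htS)

lemma exists_eq_sep_of_isExposed (hT : IsExposed ℝ S T) (hne : T.Nonempty) :
    ∃ (l : StrongDual ℝ E) (c : ℝ), (∀ s ∈ S, l s ≤ c) ∧ T = {s ∈ S | l s = c} := by
  obtain ⟨l, rfl⟩ := hT hne
  obtain ⟨t, htS, ht⟩ := hne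
  refine ⟨l, l t, ht, Set.ext fun s ↦ and_congr_right fun hs ↦ ⟨fun h ↦ ?_, fun h y hy ↦ ?_⟩⟩
  · exact (ht s hs).antisymm (h t htS)
  · exact h ▸ ht y hy

lemma finite_setOf_isExposed (hS : S.Finite) : {T | IsExposed ℝ S T}.Finite :=
  hS.finite_subsets.subset fun _ hT ↦ hT.subset

lemma isExposed_trans (hS : S.Finite) (hT : IsExposed ℝ S T) (hU : IsExposed ℝ T U) :
    IsExposed ℝ S U := by
  rcases U.eq_empty_or_nonempty with rfl | hne
  · exact isExposed_empty
  obtain ⟨l, c, hl, rfl⟩ := exists_eq_sep_of_isExposed hT (hne.mono hU.subset)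
  obtain ⟨l', c', hl', rfl⟩ := exists_eq_sep_of_isExposed hU hne
  -- For large `t` the functional `t • l + l'` is maximized over `S` only inside `T`.
  obtain ⟨t, ht⟩ : ∃ t : ℝ, ∀ s ∈ S, l s < c → l' s - c' < t * (c - l s) := by
    refine Filter.Eventually.exists (f := Filter.atTop)
      ((Filter.eventually_all_finite hS).2 fun s _ ↦ ?_)
    rw [Filter.eventually_imp_distrib_left]
    exact fun hs ↦ (Filter.tendsto_id.atTop_mul_const (sub_pos.2 hs)).eventually_gt_atTop _
  have hlt : ∀ s ∈ S, l s < c → (t • l + l') s < t * c + c' := fun s hs h ↦ by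
    have := ht s hs h
    simp only [add_apply, smul_apply, smul_eq_mul]
    linarith
  have heq : ∀ s, l s = c → (t • l + l') s = t * c + l' s := fun s h ↦ by
    simp [h]
  have hle : ∀ s ∈ S, (t • l + l') s ≤ t * c + c' := fun s hs ↦ by
    rcases (hl s hs).lt_or_eq with h | h
    · exact (hlt s hs h).le
    · rw [heq s h]
      exact add_le_add_right (hl' s ⟨hs, h⟩) _
  convert isExposed_sep_eq hle using 1
  ext s
  constructor
  · rintro ⟨⟨hs, h⟩, h'⟩
    exact ⟨hs, by rw [heq s h, h']⟩
  · rintro ⟨hs, h⟩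
    have hsc : l s = c := (hl s hs).eq_of_not_lt fun h' ↦ (hlt s hs h').ne h
    exact ⟨⟨hs, hsc⟩, add_left_cancel ((heq s hsc).symm.trans h)⟩

lemma exists_isExposed_tilt (hS : S.Finite) {l g : StrongDual ℝ E} {c c' : ℝ}
    (hl : ∀ s ∈ S, l s ≤ c) (hg : ∀ s ∈ S, l s = c → g s = c') (hne : ∃ s ∈ S, g s ≠ c') :
    ∃ τ ≠ 0, ∃ H, IsExposed ℝ S H ∧ {s ∈ S | l s = c} ⊆ H ∧ (∃ s ∈ H, g s ≠ c') ∧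
      ∀ s ∈ H, (l + τ • g) s = c + τ * c' := by
  obtain ⟨τ, hτ, hle, m, hm, hgm, hlm⟩ := exists_tilt hS
    (a := fun s ↦ l s - c) (b := fun s ↦ g s - c') (fun s hs ↦ sub_nonpos.2 (hl s hs))
    (fun s hs h ↦ sub_eq_zero.2 (hg s hs (sub_eq_zero.1 h)))
    (hne.imp fun s h ↦ h.imp_right sub_ne_zero.2)
  have hshift : ∀ s, (l + τ • g) s = l s - c + τ * (g s - c') + (c + τ * c') := fun s ↦ by
    simp only [add_apply, smul_apply, smul_eq_mul]
    ring
  refine ⟨τ, hτ, {s ∈ S | (l + τ • g) s = c + τ * c'}, isExposed_sep_eq fun s hs ↦ ?_,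
    fun s ⟨hs, h⟩ ↦ ⟨hs, ?_⟩, ⟨m, ⟨hm, ?_⟩, sub_ne_zero.1 hgm⟩, fun s hs ↦ hs.2⟩
  · rw [hshift]
    exact add_le_of_nonpos_left (hle s hs)
  · simp [h, hg s hs h]
  · rw [hshift, hlm, zero_add]

/-- The facets of `S`, i.e. its nonempty faces of codimension one. For `affineDim S = 1` these are
the two endpoints; the empty face of a point is not counted. -/
def facets (S : Set E) : Set (Set E) :=
  {F | IsExposed ℝ S F ∧ F.Nonempty ∧ affineDim S = affineDim F + 1}

/-- The faces of `S` containing the face `T` and of dimension one more: the vertices of the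
quotient polytope `S / T`. -/
def upperFaces (S T : Set E) : Set (Set E) :=
  {U | IsExposed ℝ S U ∧ T ⊆ U ∧ affineDim U = affineDim T + 1}

/-- The faces of `S` joined to its face `T` in the graph on the faces of the dimension of `T`. -/
def adjacentFaces (S T : Set E) : Set (Set E) :=
  {R | IsExposed ℝ S R ∧ R.Nonempty ∧ affineDim R = affineDim T ∧ R ≠ T ∧
    ∃ G ∈ upperFaces S T, R ⊆ G}

lemma finite_facets (hS : S.Finite) : (facets S).Finite :=
  (finite_setOf_isExposed hS).sep _

lemma finite_upperFaces (hS : S.Finite) : (upperFaces S T).Finite :=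
  (finite_setOf_isExposed hS).sep _

lemma mem_facets_of_mem_upperFaces {G : Set E} (hT : IsExposed ℝ S T) (hne : T.Nonempty)
    (hG : G ∈ upperFaces S T) : T ∈ facets G :=
  ⟨hT.mono hG.1.subset hG.2.1, hne, hG.2.2⟩

lemma biUnion_facets_sdiff_subset_adjacentFaces (hS : S.Finite) :
    ⋃ G ∈ upperFaces S T, facets G \ {T} ⊆ adjacentFaces S T := by
  refine Set.iUnion₂_subset fun G hG R ⟨hRG, hRT⟩ ↦
    ⟨isExposed_trans hS hG.1 hRG.1, hRG.2.1, ?_, hRT, G, hG, hRG.1.subset⟩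
  exact Nat.succ_injective (hRG.2.2.symm.trans hG.2.2)

variable [FiniteDimensional ℝ E]

lemma affineDim_lt_of_isExposed (hT : IsExposed ℝ S T) (hne : T.Nonempty) (hTS : T ≠ S) :
    affineDim T < affineDim S := by
  obtain ⟨l, c, -, hTeq⟩ := exists_eq_sep_of_isExposed hT hne
  refine (affineDim_mono hT.subset).lt_of_ne fun hdim ↦ hTS (hT.subset.antisymm fun s hs ↦ ?_)
  have hspan : vectorSpan ℝ T = vectorSpan ℝ S :=
    Submodule.eq_of_le_of_finrank_eq (vectorSpan_mono ℝ hT.subset) hdim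
  have hlT : ∀ x ∈ T, l x = c := fun x hx ↦ (hTeq ▸ hx : x ∈ {s ∈ S | l s = c}).2
  have hlS : vectorSpan ℝ S ≤ LinearMap.ker (l : E →ₗ[ℝ] ℝ) :=
    hspan ▸ vectorSpan_le_ker_iff.2 fun x hx y hy ↦ (hlT x hx).trans (hlT y hy).symm
  obtain ⟨t, ht⟩ := hne
  rw [hTeq]
  exact ⟨hs, (vectorSpan_le_ker_iff.1 hlS s hs t (hT.subset ht)).trans (hlT t ht)⟩

lemma eq_of_isExposed_of_affineDim_le (hT : IsExposed ℝ S T) (hne : T.Nonempty)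
    (hdim : affineDim S ≤ affineDim T) : T = S :=
  not_ne_iff.1 fun hTS ↦ (affineDim_lt_of_isExposed hT hne hTS).not_ge hdim

lemma inter_eq_of_mem_upperFaces {G G' : Set E} (hT : IsExposed ℝ S T) (hne : T.Nonempty)
    (hG : G ∈ upperFaces S T) (hG' : G' ∈ upperFaces S T) (hGG' : G ≠ G') : G ∩ G' = T := by
  obtain ⟨hG, hTG, hdim⟩ := hG
  obtain ⟨hG', hTG', hdim'⟩ := hG'
  have hI : IsExposed ℝ S (G ∩ G') := hG.inter hG'
  have hTI : T ⊆ G ∩ G' := Set.subset_inter hTG hTG'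
  by_contra hIT
  have hlt := affineDim_lt_of_isExposed (hT.mono hI.subset hTI) hne (Ne.symm hIT)
  have hIG := eq_of_isExposed_of_affineDim_le (hI.mono hG.subset Set.inter_subset_left)
    (hne.mono hTI) (by omega)
  have hIG' := eq_of_isExposed_of_affineDim_le (hI.mono hG'.subset Set.inter_subset_right)
    (hne.mono hTI) (by omega)
  exact hGG' (hIG.symm.trans hIG')

lemma pairwiseDisjoint_facets_sdiff (hT : IsExposed ℝ S T) (hne : T.Nonempty) :
    (upperFaces S T).PairwiseDisjoint fun G ↦ facets G \ {T} := by
  refine fun G hG G' hG' hGG' ↦ Set.disjoint_left.2 fun R ⟨hRG, hRT⟩ ⟨hRG', _⟩ ↦ hRT ?_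
  have hRsub : R ⊆ T := inter_eq_of_mem_upperFaces hT hne hG hG' hGG' ▸
    Set.subset_inter hRG.1.subset hRG'.1.subset
  have hRT' : IsExposed ℝ T R := hRG.1.mono hG.2.1 hRsub
  refine eq_of_isExposed_of_affineDim_le hRT' hRG.2.1 ?_
  have hdim : affineDim G = affineDim T + 1 := hG.2.2
  have hdim' : affineDim G = affineDim R + 1 := hRG.2.2
  omega

variable [IsTopologicalAddGroup E] [ContinuousSMul ℝ E] [T2Space E]

lemma exists_strongDual_le_ker_of_notMem {W : Submodule ℝ E} {x : E} (hx : x ∉ W) :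
    ∃ g : StrongDual ℝ E, g x ≠ 0 ∧ W ≤ LinearMap.ker (g : E →ₗ[ℝ] ℝ) := by
  obtain ⟨g, hgx, hgW⟩ := W.exists_le_ker_of_notMem hx
  exact ⟨g.toContinuousLinearMap, hgx, hgW⟩

lemma affineDim_eq_add_one_of_maximal (hS : S.Finite) (hT : IsExposed ℝ S T) (hne : T.Nonempty)
    (hTS : T ≠ S) (hmax : ∀ H, IsExposed ℝ S H → T ⊂ H → H = S) :
    affineDim S = affineDim T + 1 := by
  refine le_antisymm ?_ (affineDim_lt_of_isExposed hT hne hTS)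
  obtain ⟨l, c, hl, hTeq⟩ := exists_eq_sep_of_isExposed hT hne
  -- Tilting the hyperplane `l = c` about `T` in any direction reaches all of `S` at once, so
  -- modulo `vectorSpan ℝ T` the only functional on `vectorSpan ℝ S` is `l`, up to scaling.
  suffices hle : vectorSpan ℝ S ⊓ LinearMap.ker (l : E →ₗ[ℝ] ℝ) ≤ vectorSpan ℝ T from
    (finrank_le_finrank_inf_ker_add_one _ _).trans
      (Nat.add_le_add_right (Submodule.finrank_mono hle) 1)
  rintro x ⟨hxS, hlx⟩
  by_contra hxT
  obtain ⟨g, hgx, hgT⟩ := exists_strongDual_le_ker_of_notMem hxT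
  obtain ⟨t, ht⟩ := hne
  have hgt : ∀ s ∈ T, g s = g t := fun s hs ↦ vectorSpan_le_ker_iff.1 hgT s hs t ht
  have hgS : ∃ s ∈ S, g s ≠ g t := by
    by_contra! hconst
    exact hgx (vectorSpan_le_ker_iff (l := (g : E →ₗ[ℝ] ℝ)).2
      (fun y hy z hz ↦ (hconst y hy).trans (hconst z hz).symm) hxS)
  obtain ⟨τ, hτ, H, hH, hTH, ⟨m, hmH, hgm⟩, hconst⟩ :=
    exists_isExposed_tilt hS hl (fun s hs h ↦ hgt s (hTeq ▸ ⟨hs, h⟩)) hgS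
  obtain rfl : H = S := hmax H hH ⟨hTeq ▸ hTH, fun hHT ↦ hgm (hgt m (hHT hmH))⟩
  have hker : vectorSpan ℝ H ≤ LinearMap.ker ((l + τ • g : StrongDual ℝ E) : E →ₗ[ℝ] ℝ) :=
    vectorSpan_le_ker_iff.2 fun y hy z hz ↦ (hconst y hy).trans (hconst z hz).symm
  have hlgx : l x + τ * g x = 0 := hker hxS
  rw [show l x = 0 from hlx, zero_add] at hlgx
  exact mul_ne_zero hτ hgx hlgx

lemma exists_mem_facets_superset (hS : S.Finite) (hT : IsExposed ℝ S T) (hne : T.Nonempty)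
    (hTS : T ≠ S) : ∃ G ∈ facets S, T ⊆ G := by
  obtain ⟨G, hTG, ⟨hG, hGS⟩, hmax⟩ :=
    ((finite_setOf_isExposed hS).sep (· ≠ S)).exists_le_maximal (a := T) ⟨hT, hTS⟩
  have hGne : G.Nonempty := hne.mono hTG
  refine ⟨G, ⟨hG, hGne, affineDim_eq_add_one_of_maximal hS hG hGne hGS fun H hH hGH ↦ ?_⟩, hTG⟩
  by_contra hHS
  exact hGH.not_subset (hmax ⟨hH, hHS⟩ hGH.subset)

lemma exists_mem_upperFaces_not_subset {G : Set E} (hS : S.Finite) (hT : IsExposed ℝ S T)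
    (hne : T.Nonempty) (hG : IsExposed ℝ S G) (hTG : T ⊆ G) (hGS : G ≠ S) :
    ∃ U ∈ upperFaces S T, ¬ U ⊆ G := by
  obtain ⟨U, -, ⟨hU, hTU, hUG⟩, hmin⟩ :=
    ((finite_setOf_isExposed hS).sep fun U ↦ T ⊆ U ∧ ¬ U ⊆ G).exists_le_minimal (a := S)
      ⟨IsExposed.refl S, hT.subset, fun h ↦ hGS (hG.subset.antisymm h)⟩
  have hUfin := hS.subset hU.subset
  have eq_of_not_subset : ∀ H, IsExposed ℝ U H → T ⊆ H → ¬ H ⊆ G → H = U := fun H hH hTH hHG ↦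
    hH.subset.antisymm (hmin ⟨isExposed_trans hS hU hH, hTH, hHG⟩ hH.subset)
  have hTU' : IsExposed ℝ U T := hT.mono hU.subset hTU
  have hUG' : IsExposed ℝ U (U ∩ G) := (hU.inter hG).mono hU.subset Set.inter_subset_left
  obtain ⟨l, c, hl, hTeq⟩ := exists_eq_sep_of_isExposed hTU' hne
  obtain ⟨g, c', -, hGeq⟩ := exists_eq_sep_of_isExposed hUG' (hne.mono (Set.subset_inter hTU hTG))
  have mem_T : ∀ s ∈ U, s ∈ T ↔ l s = c := fun s hs ↦ by simp [hTeq, hs]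
  have mem_G : ∀ s ∈ U, s ∈ G ↔ g s = c' := fun s hs ↦ by
    simpa [hs] using Set.ext_iff.1 hGeq s
  -- Tilting about `T` leaves `G`, so by minimality it reaches all of `U` at once.
  obtain ⟨u, hu, huG⟩ := Set.not_subset.1 hUG
  obtain ⟨τ, -, H, hH, hTH, ⟨m, hmH, hgm⟩, hconst⟩ :=
    exists_isExposed_tilt hUfin hl (fun s hs h ↦ (mem_G s hs).1 (hTG ((mem_T s hs).2 h)))
      ⟨u, hu, mt (mem_G u hu).2 huG⟩
  obtain rfl : H = U := eq_of_not_subset H hH (hTeq ▸ hTH)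
    fun hHG ↦ hgm ((mem_G m (hH.subset hmH)).1 (hHG hmH))
  have hUGT : H ∩ G ⊆ T := fun s ⟨hs, hsG⟩ ↦ by
    have := hconst s hs
    simp only [add_apply, smul_apply, smul_eq_mul, (mem_G s hs).1 hsG] at this
    exact (mem_T s hs).2 (add_right_cancel this)
  refine ⟨H, ⟨hU, hTU, affineDim_eq_add_one_of_maximal hUfin hTU' hne ?_ ?_⟩, hUG⟩
  · rintro rfl
    exact hUG hTG
  · exact fun K hK hTK ↦ eq_of_not_subset K hK hTK.subset
      fun hKG ↦ hTK.not_subset ((Set.subset_inter hK.subset hKG).trans hUGT)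

lemma affineDim_le_add_ncard_upperFaces (hS : S.Finite) (hT : IsExposed ℝ S T)
    (hne : T.Nonempty) : affineDim S ≤ affineDim T + (upperFaces S T).ncard := by
  induction hn : affineDim S generalizing S with
  | zero => exact Nat.zero_le _
  | succ n ih =>
    rcases eq_or_ne T S with rfl | hTS
    · exact hn ▸ Nat.le_add_right _ _
    obtain ⟨G, ⟨hG, -, hdim⟩, hTG⟩ := exists_mem_facets_superset hS hT hne hTS
    have hGS : G ≠ S := by
      rintro rfl
      omega
    have hle := ih (hS.subset hG.subset) (hT.mono hG.subset hTG) (by omega)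
    obtain ⟨U, hU, hUG⟩ := exists_mem_upperFaces_not_subset hS hT hne hG hTG hGS
    have hins : insert U (upperFaces G T) ⊆ upperFaces S T :=
      Set.insert_subset hU fun V ⟨hV, hTV, hVdim⟩ ↦ ⟨isExposed_trans hS hG hV, hTV, hVdim⟩
    have hcard := Set.ncard_le_ncard hins (finite_upperFaces hS)
    rw [Set.ncard_insert_of_notMem (fun h ↦ hUG h.1.subset)
      (finite_upperFaces (hS.subset hG.subset))] at hcard
    omega

lemma exists_disjoint_isExposed (hS : S.Finite) (hdim : 0 < affineDim S) :
    ∃ A B, IsExposed ℝ S A ∧ IsExposed ℝ S B ∧ A.Nonempty ∧ B.Nonempty ∧ Disjoint A B := by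
  obtain ⟨v, hv, hv0⟩ := Submodule.exists_mem_ne_zero_of_ne_bot
    (Submodule.one_le_finrank_iff.1 hdim)
  obtain ⟨g, hgv, -⟩ := exists_strongDual_le_ker_of_notMem (mt (Submodule.mem_bot ℝ).1 hv0)
  have hg : ¬ ∀ x ∈ S, ∀ y ∈ S, g x = g y := fun h ↦
    hgv (vectorSpan_le_ker_iff (l := (g : E →ₗ[ℝ] ℝ)).2 h hv)
  have hne : S.Nonempty := by
    by_contra hempty
    simp [Set.not_nonempty_iff_eq_empty.1 hempty] at hg
  obtain ⟨p, hp, hmax⟩ := S.exists_max_image g hS hne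
  obtain ⟨q, hq, hmin⟩ := S.exists_min_image g hS hne
  refine ⟨g.toExposed S, (-g).toExposed S, ContinuousLinearMap.toExposed.isExposed,
    ContinuousLinearMap.toExposed.isExposed, ⟨p, hp, hmax⟩,
    ⟨q, hq, fun y hy ↦ neg_le_neg (hmin y hy)⟩, ?_⟩
  refine Set.disjoint_left.2 fun x hxmax hxmin ↦ hg ?_
  have hx : ∀ y ∈ S, g y = g x := fun y hy ↦
    (hxmax.2 y hy).antisymm (neg_le_neg_iff.1 (hxmin.2 y hy))
  exact fun y hy z hz ↦ (hx y hy).trans (hx z hz).symm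

lemma ncard_facets_lt_of_mem_facets {F : Set E} (hS : S.Finite) (hF : F ∈ facets S) :
    (facets F).ncard < (facets S).ncard := by
  obtain ⟨hF, hFne, hdim⟩ := hF
  have hexp : ∀ R ∈ facets F, IsExposed ℝ S R := fun R hR ↦ isExposed_trans hS hF hR.1
  have hup : ∀ R ∈ facets F, F ∈ upperFaces S R := fun R hR ↦ ⟨hF, hR.1.subset, hR.2.2⟩
  -- Every ridge `R ⊂ F` lies on a second facet `φ R`, and `R = F ∩ φ R` can be recovered from it.
  have hother : ∀ R ∈ facets F, ∃ G ∈ upperFaces S R, G ≠ F := fun R hR ↦ by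
    have hle := affineDim_le_add_ncard_upperFaces hS (hexp R hR) hR.2.1
    have hFR : affineDim F = affineDim R + 1 := hR.2.2
    exact Set.exists_ne_of_one_lt_ncard (by omega) F
  choose! φ hφ hφF using hother
  have hinter : ∀ R ∈ facets F, F ∩ φ R = R := fun R hR ↦
    inter_eq_of_mem_upperFaces (hexp R hR) hR.2.1 (hup R hR) (hφ R hR) (hφF R hR).symm
  have hinj : Set.InjOn φ (facets F) := fun R hR R' hR' h ↦ by
    rw [← hinter R hR, h, hinter R' hR']
  have hFφ : F ∉ φ '' facets F := fun ⟨R, hR, h⟩ ↦ hφF R hR h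
  have hsub : insert F (φ '' facets F) ⊆ facets S := by
    refine Set.insert_subset ⟨hF, hFne, hdim⟩ (Set.image_subset_iff.2 fun R hR ↦ ?_)
    obtain ⟨hG, hRG, hGdim⟩ := hφ R hR
    exact ⟨hG, hR.2.1.mono hRG, by rw [hdim, hR.2.2, hGdim]⟩
  calc (facets F).ncard = (φ '' facets F).ncard := hinj.ncard_image.symm
    _ < (insert F (φ '' facets F)).ncard := by
      rw [Set.ncard_insert_of_notMem hFφ ((finite_facets (hS.subset hF.subset)).image φ)]
      exact Nat.lt_succ_self _
    _ ≤ (facets S).ncard := Set.ncard_le_ncard hsub (finite_facets hS)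

lemma one_lt_ncard_facets_of_affineDim_eq_one (hS : S.Finite) (hdim : affineDim S = 1) :
    1 < (facets S).ncard := by
  obtain ⟨A, B, hA, hB, hAne, hBne, hAB⟩ := exists_disjoint_isExposed hS (by omega)
  have hAlt := affineDim_lt_of_isExposed hA hAne (ne_of_disjoint_of_subset hAB hBne hB.subset)
  have hBlt := affineDim_lt_of_isExposed hB hBne (ne_of_disjoint_of_subset hAB.symm hAne hA.subset)
  exact (Set.one_lt_ncard_iff (finite_facets hS)).2
    ⟨A, B, ⟨hA, hAne, by omega⟩, ⟨hB, hBne, by omega⟩, hAB.ne hAne.ne_empty⟩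

lemma affineDim_lt_ncard_facets (hS : S.Finite) (hdim : 0 < affineDim S) :
    affineDim S < (facets S).ncard := by
  induction hn : affineDim S generalizing S with
  | zero => omega
  | succ n ih =>
    rcases n.eq_zero_or_pos with rfl | hnpos
    · exact one_lt_ncard_facets_of_affineDim_eq_one hS hn
    obtain ⟨A, B, hA, hB, hAne, hBne, hAB⟩ := exists_disjoint_isExposed hS hdim
    obtain ⟨F, hF, -⟩ :=
      exists_mem_facets_superset hS hA hAne (ne_of_disjoint_of_subset hAB hBne hB.subset)
    have hFdim : affineDim S = affineDim F + 1 := hF.2.2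
    have hFcard := ih (hS.subset hF.1.subset) (by omega) (by omega)
    have := ncard_facets_lt_of_mem_facets hS hF
    omega

lemma mul_le_ncard_adjacentFaces (hS : S.Finite) (hT : IsExposed ℝ S T) (hne : T.Nonempty) :
    (affineDim T + 1) * (affineDim S - affineDim T) ≤ (adjacentFaces S T).ncard := by
  have hfin : ∀ G ∈ upperFaces S T, G.Finite := fun G hG ↦ hS.subset hG.1.subset
  have hcard : ∀ G ∈ upperFaces S T, affineDim T + 1 ≤ (facets G \ {T}).ncard := fun G hG ↦ by
    have hdim : affineDim G = affineDim T + 1 := hG.2.2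
    have hlt := affineDim_lt_ncard_facets (hfin G hG) (by omega)
    rw [Set.ncard_sdiff_singleton_of_mem (mem_facets_of_mem_upperFaces hT hne hG)]
    omega
  calc (affineDim T + 1) * (affineDim S - affineDim T)
      ≤ (affineDim T + 1) * (upperFaces S T).ncard :=
        Nat.mul_le_mul_left _
          (Nat.sub_le_iff_le_add'.2 (affineDim_le_add_ncard_upperFaces hS hT hne))
    _ ≤ (⋃ G ∈ upperFaces S T, facets G \ {T}).ncard :=
        mul_ncard_le_ncard_biUnion (finite_upperFaces hS)
          (fun G hG ↦ (finite_facets (hfin G hG)).sdiff)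
          (pairwiseDisjoint_facets_sdiff hT hne) hcard
    _ ≤ (adjacentFaces S T).ncard :=
        Set.ncard_le_ncard (biUnion_facets_sdiff_subset_adjacentFaces hS)
          ((finite_setOf_isExposed hS).sep _)

end ExposedFace

section ConvexHull

lemma convexHull_sep_eq {E 𝓕 : Type*} [AddCommGroup E] [Module ℝ E] [FunLike 𝓕 E ℝ]
    [LinearMapClass 𝓕 ℝ E ℝ] {S : Set E} {l : 𝓕} {c : ℝ} (hl : ∀ s ∈ S, l s ≤ c) :
    convexHull ℝ {s ∈ S | l s = c} = {x ∈ convexHull ℝ S | l x = c} := by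
  refine Set.Subset.antisymm (Set.subset_inter (convexHull_mono (Set.sep_subset S _))
    (convexHull_min (fun s hs ↦ hs.2) (convex_hyperplane (l : E →ₗ[ℝ] ℝ).isLinear c))) ?_
  suffices hsub : convexHull ℝ S ⊆ {x | l x ≤ c ∧ (l x = c → x ∈ convexHull ℝ {s ∈ S | l s = c})}
    from fun x hx ↦ (hsub hx.1).2 hx.2
  refine convexHull_min (fun s hs ↦ ⟨hl s hs, fun h ↦ subset_convexHull ℝ _ ⟨hs, h⟩⟩) ?_
  -- A convex combination of points with `l ≤ c` has `l = c` only if each of them has.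
  rw [convex_iff_forall_pos]
  rintro x ⟨hx, hx'⟩ y ⟨hy, hy'⟩ p q hp hq hpq
  have hlxy : l (p • x + q • y) = p * l x + q * l y := by simp
  have hc : c = p * c + q * c := by rw [← add_mul, hpq, one_mul]
  have hpx := mul_le_mul_of_nonneg_left hx hp.le
  have hqy := mul_le_mul_of_nonneg_left hy hq.le
  refine ⟨by linarith, fun h ↦ convex_convexHull ℝ _ (hx' ?_) (hy' ?_) hp.le hq.le hpq⟩
  · exact mul_left_cancel₀ hp.ne' (by linarith)
  · exact mul_left_cancel₀ hq.ne' (by linarith)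

variable {E : Type*} [AddCommGroup E] [Module ℝ E] [TopologicalSpace E] {S T : Set E}

lemma isExposed_convexHull (hT : IsExposed ℝ S T) :
    IsExposed ℝ (convexHull ℝ S) (convexHull ℝ T) := by
  rcases T.eq_empty_or_nonempty with rfl | hne
  · rw [convexHull_empty]
    exact isExposed_empty
  obtain ⟨l, c, hl, rfl⟩ := exists_eq_sep_of_isExposed hT hne
  rw [convexHull_sep_eq hl]
  exact isExposed_sep_eq fun x hx ↦
    convexHull_min hl (convex_halfSpace_le (l : E →ₗ[ℝ] ℝ).isLinear c) hx

lemma inter_convexHull_eq_of_isExposed (hT : IsExposed ℝ S T) : S ∩ convexHull ℝ T = T := by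
  rcases T.eq_empty_or_nonempty with rfl | hne
  · simp
  refine (Set.subset_inter hT.subset (subset_convexHull ℝ T)).antisymm' fun s ⟨hs, hsT⟩ ↦ ?_
  obtain ⟨l, c, hl, rfl⟩ := exists_eq_sep_of_isExposed hT hne
  rw [convexHull_sep_eq hl] at hsT
  exact ⟨hs, hsT.2⟩

lemma exists_eq_convexHull_of_isExposed {F : Set E} (hF : IsExposed ℝ (convexHull ℝ S) F) :
    ∃ T, IsExposed ℝ S T ∧ convexHull ℝ T = F := by
  rcases F.eq_empty_or_nonempty with rfl | hne
  · exact ⟨∅, isExposed_empty, convexHull_empty⟩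
  obtain ⟨l, c, hl, rfl⟩ := exists_eq_sep_of_isExposed hF hne
  have hlS : ∀ s ∈ S, l s ≤ c := fun s hs ↦ hl s (subset_convexHull ℝ S hs)
  exact ⟨_, isExposed_sep_eq hlS, convexHull_sep_eq hlS⟩

lemma bijOn_convexHull_isExposed (S : Set E) :
    Set.BijOn (convexHull ℝ) {T | IsExposed ℝ S T} {F | IsExposed ℝ (convexHull ℝ S) F} := by
  refine ⟨fun T hT ↦ isExposed_convexHull hT, fun T hT U hU h ↦ ?_,
    fun F hF ↦ exists_eq_convexHull_of_isExposed hF⟩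
  rw [← inter_convexHull_eq_of_isExposed hT, h, inter_convexHull_eq_of_isExposed hU]

end ConvexHull

section FaceGraph

variable {N : ℕ} {S T : Set (EuclideanSpace ℝ (Fin N))}

lemma sdim_convexHull (S : Set (EuclideanSpace ℝ (Fin N))) :
    sdim (convexHull ℝ S) = affineDim S := by
  rw [sdim, direction_affineSpan, ← affineDim_convexHull, affineDim]

lemma isFaceDim_convexHull (hT : IsExposed ℝ S T) (hne : T.Nonempty) :
    IsFaceDim (convexHull ℝ S) (convexHull ℝ T) (affineDim T) :=
  ⟨isExposed_convexHull hT, hne.convexHull, sdim_convexHull T⟩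

lemma convexHull_mem_image_neighborSet_faceGraph {R : Set (EuclideanSpace ℝ (Fin N))} {k : ℕ}
    (hT : IsExposed ℝ S T) (hF : IsFaceDim (convexHull ℝ S) (convexHull ℝ T) k)
    (hR : R ∈ adjacentFaces S T) :
    convexHull ℝ R ∈ Subtype.val '' (faceGraph (convexHull ℝ S) k).neighborSet ⟨_, hF⟩ := by
  obtain ⟨hR, hRne, hRdim, hRT, G, ⟨hG, hTG, hGdim⟩, hRG⟩ := hR
  obtain rfl : affineDim T = k := (sdim_convexHull T).symm.trans hF.2.2
  have hGF : IsFaceDim (convexHull ℝ S) (convexHull ℝ G) (affineDim T + 1) :=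
    hGdim ▸ isFaceDim_convexHull hG (hRne.mono hRG)
  refine ⟨⟨_, hRdim ▸ isFaceDim_convexHull hR hRne⟩, ?_, rfl⟩
  rw [SimpleGraph.mem_neighborSet, faceGraph, SimpleGraph.fromRel_adj]
  refine ⟨fun h ↦ hRT ?_, Or.inl ⟨_, hGF, convexHull_mono hTG, convexHull_mono hRG⟩⟩
  exact ((bijOn_convexHull_isExposed S).injOn hT hR (congrArg Subtype.val h)).symm

lemma finite_setOf_isExposed_convexHull (hS : S.Finite) :
    {F | IsExposed ℝ (convexHull ℝ S) F}.Finite :=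
  (bijOn_convexHull_isExposed S).image_eq ▸ (finite_setOf_isExposed hS).image _

end FaceGraph

/-- Every `k`-dimensional face `F` of a `d`-dimensional convex polytope `P`
(`0 ≤ k ≤ d-1`) has at least `(k+1)(d-k)` neighbors in the graph `G_k(P)`. -/
theorem stmt_6 (d k : ℕ) (hk : k < d) {N : ℕ}
    (P : Set (EuclideanSpace ℝ (Fin N))) (hP : IsPolytope P) (hdim : sdim P = d)
    (F : Set (EuclideanSpace ℝ (Fin N))) (hF : IsFaceDim P F k) :
    (k + 1) * (d - k) ≤ ((faceGraph P k).neighborSet ⟨F, hF⟩).ncard := by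
  obtain ⟨S, hS, rfl⟩ := hP
  obtain ⟨T, hT, rfl⟩ := exists_eq_convexHull_of_isExposed hF.1
  have hne : T.Nonempty := convexHull_nonempty_iff.1 hF.2.1
  have hTdim : affineDim T = k := (sdim_convexHull T).symm.trans hF.2.2
  have hSdim : affineDim S = d := (sdim_convexHull S).symm.trans hdim
  have hinj : Set.InjOn (convexHull ℝ) (adjacentFaces S T) :=
    (bijOn_convexHull_isExposed S).injOn.mono fun R hR ↦ hR.1
  have hfin : (Subtype.val '' (faceGraph (convexHull ℝ S) k).neighborSet ⟨_, hF⟩).Finite :=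
    (finite_setOf_isExposed_convexHull hS).subset fun _ ⟨R, _, h⟩ ↦ h ▸ R.2.1
  calc (k + 1) * (d - k) ≤ (adjacentFaces S T).ncard := by
        simpa only [hTdim, hSdim] using mul_le_ncard_adjacentFaces hS hT hne
    _ ≤ (Subtype.val '' (faceGraph (convexHull ℝ S) k).neighborSet ⟨_, hF⟩).ncard :=
        Set.ncard_le_ncard_of_injOn _
          (fun R hR ↦ convexHull_mem_image_neighborSet_faceGraph hT hF hR) hinj hfin
    _ = ((faceGraph (convexHull ℝ S) k).neighborSet ⟨_, hF⟩).ncard :=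
        Set.ncard_image_of_injective _ Subtype.val_injective
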